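/- arXiv:1805.02072 — 2 statements merged into one kernel-verified Lean document; each statement's English description precedes it below -/
import Mathlib

section
/- Let T be a non-degenerate triangle in the plane that has a right angle (one of its angles equals π/2), and let ε > 0. Then there exists a constant C > 0 such that for every natural number n, h(n, T, ε) ≥ n³/15 − C·n². -/
open EuclideanGeometry

noncomputable section

abbrev Plane := EuclideanSpace ℝ (Fin 2)

/-- A triple of points is a (non-degenerate) triangle if its points are not collinear. -/
def IsTriangle (p : Fin 3 → Plane) : Prop := ¬ Collinear ℝ (Set.range p)

/-- The angle of the triple `p` at its `i`-th vertex. -/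
noncomputable def triAngle (p : Fin 3 → Plane) (i : Fin 3) : ℝ :=
  EuclideanGeometry.angle (p (i + 1)) (p i) (p (i + 2))

/-- `p` is ε-similar to `T`: some correspondence of vertices makes corresponding
angles differ by less than ε. -/
def EpsSimilar (ε : ℝ) (p T : Fin 3 → Plane) : Prop :=
  ∃ σ : Equiv.Perm (Fin 3), ∀ i, |triAngle p i - triAngle T (σ i)| < ε

/-- The finite set `S` forms a triangle ε-similar to `T`. -/
def FormsSimilar (ε : ℝ) (T : Fin 3 → Plane) (S : Finset Plane) : Prop :=
  ∃ p : Fin 3 → Plane, (S : Set Plane) = Set.range p ∧ IsTriangle p ∧ EpsSimilar ε p T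

/-- The number of 3-element subsets of `P` forming a triangle ε-similar to `T`. -/
noncomputable def simCount (ε : ℝ) (T : Fin 3 → Plane) (P : Finset Plane) : ℕ :=
  Set.ncard {S : Finset Plane | S ⊆ P ∧ S.card = 3 ∧ FormsSimilar ε T S}

/-- `hGeo n T ε` = maximum over `n`-point sets `P` of the number of 3-element
subsets of `P` forming a triangle ε-similar to `T`. -/
noncomputable def hGeo (n : ℕ) (T : Fin 3 → Plane) (ε : ℝ) : ℕ :=
  sSup {m | ∃ P : Finset Plane, P.card = n ∧ simCount ε T P = m}

/-- The recurrence defining the sequence `h`. -/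
def HRec (h : ℕ → ℕ) : Prop :=
  h 0 = 0 ∧ h 1 = 0 ∧ h 2 = 0 ∧
  ∀ n, 3 ≤ n → IsGreatest
    {m | ∃ a b c : ℕ, a + b + c = n ∧ a ≤ n - 1 ∧ b ≤ n - 1 ∧ c ≤ n - 1 ∧
      m = a * b * c + h a + h b + h c} (h n)

/-!
Being `ε`-similar to `T` is an open condition on labelled triangles. So if every point of a finite
set `V` is replaced by a sufficiently small copy of an `m`-point set `P`, then all `m ^ 3` triples
with one point in each of three clusters inherit similarity from the triangle of `V` below them,
while each of the clusters contributes as many triangles as `P`. With `P` optimal this gives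
`h(#V * m) ≥ simCount V * m ^ 3 + #V * h(m)`.

A right triangle completes to a rectangle, and any three corners of the rectangle span a triangle
congruent to the given one. For this `V` the recursion reads `h(4m) ≥ 4m³ + 4h(m)`, and `c n³`
solves it with equality for `c = 4 / (4³ - 4) = 1 / 15`. Rounding `n` down to a multiple of `4` at
every step costs only `O(n²)` in total.
-/

section SimilarTriangles

open Filter Finset Function
open scoped Pointwise Similar Congruent Topology

local instance : DecidableEq Plane := Classical.decEq Plane

variable {ε : ℝ} {T p q : Fin 3 → Plane} {P V : Finset Plane}

lemma affineIndependent_iff_isTriangle : AffineIndependent ℝ p ↔ IsTriangle p :=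
  affineIndependent_iff_not_collinear

lemma IsTriangle.injective (hp : IsTriangle p) : Injective p :=
  (affineIndependent_iff_isTriangle.2 hp).injective

lemma IsTriangle.comp_perm (hp : IsTriangle p) (σ : Equiv.Perm (Fin 3)) : IsTriangle (p ∘ σ) := by
  rwa [IsTriangle, σ.surjective.range_comp]

lemma isTriangle_iff_angle :
    IsTriangle p ↔ p 0 ≠ p 1 ∧ p 2 ≠ p 1 ∧ ∠ (p 0) (p 1) (p 2) ≠ 0 ∧
      ∠ (p 0) (p 1) (p 2) ≠ Real.pi := by
  have range_eq : Set.range p = {p 0, p 1, p 2} := by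
    ext x
    simp [Fin.exists_fin_succ, eq_comm]
  rw [IsTriangle, range_eq, collinear_iff_eq_or_eq_or_angle_eq_zero_or_angle_eq_pi]
  tauto

lemma angle_eq_of_similar (h : p ∼ q) (i j k : Fin 3) :
    ∠ (p i) (p j) (p k) = ∠ (q i) (q j) (q k) := by
  have reindexed : ![p i, p j, p k] ∼ ![q i, q j, q k] := by
    convert h.index_map ![i, j, k] using 1 <;> ext1 n <;> fin_cases n <;> rfl
  exact reindexed.angle_eq

lemma IsTriangle.of_similar (hq : IsTriangle q) (h : p ∼ q) : IsTriangle p := by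
  obtain ⟨r, hr, hdist⟩ := similar_iff_exists_pos_dist_eq.1 h
  have ne_iff (i j : Fin 3) : p i ≠ p j ↔ q i ≠ q j := by
    simp only [← dist_pos, hdist, mul_pos_iff_of_pos_left hr]
  rw [isTriangle_iff_angle] at hq ⊢
  rwa [ne_iff, ne_iff, angle_eq_of_similar h]

lemma triAngle_comp_perm (p : Fin 3 → Plane) (σ : Equiv.Perm (Fin 3)) (i : Fin 3) :
    triAngle (p ∘ σ) i = triAngle p (σ i) := by
  have perm_preserves_or_swaps_neighbours : ∀ (σ : Equiv.Perm (Fin 3)) (i : Fin 3),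
      σ (i + 1) = σ i + 1 ∧ σ (i + 2) = σ i + 2 ∨ σ (i + 1) = σ i + 2 ∧ σ (i + 2) = σ i + 1 := by
    decide
  rcases perm_preserves_or_swaps_neighbours σ i with ⟨h₁, h₂⟩ | ⟨h₁, h₂⟩
  · simp only [triAngle, comp_apply, h₁, h₂]
  · simp only [triAngle, comp_apply, h₁, h₂]
    exact EuclideanGeometry.angle_comm _ _ _

lemma IsTriangle.continuousAt_triAngle (hp : IsTriangle p) (i : Fin 3) :
    ContinuousAt (triAngle · i) p := by
  have succ_ne : p (i + 1) ≠ p i := hp.injective.ne (by simp)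
  have succ_succ_ne : p (i + 2) ≠ p i := hp.injective.ne (by simp)
  exact ContinuousAt.comp (f := fun q : Fin 3 → Plane ↦ (q (i + 1), q i, q (i + 2)))
    (EuclideanGeometry.continuousAt_angle succ_ne succ_succ_ne) (by fun_prop)

/-- The ordered triple `p` is a triangle `ε`-similar to `T`. Unlike `FormsSimilar` this speaks about
a fixed labelling of the vertices, so that perturbations of `p` are points of a product space. -/
def IsSimilarTriangle (ε : ℝ) (T p : Fin 3 → Plane) : Prop :=
  IsTriangle p ∧ EpsSimilar ε p T

lemma IsSimilarTriangle.injective (hp : IsSimilarTriangle ε T p) : Injective p :=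
  hp.1.injective

lemma IsSimilarTriangle.comp_perm (hp : IsSimilarTriangle ε T p) (σ : Equiv.Perm (Fin 3)) :
    IsSimilarTriangle ε T (p ∘ σ) := by
  obtain ⟨htri, τ, hτ⟩ := hp
  exact ⟨htri.comp_perm σ, σ.trans τ, fun i ↦ by simpa [triAngle_comp_perm] using hτ (σ i)⟩

lemma IsSimilarTriangle.of_similar (hq : IsSimilarTriangle ε T q) (h : p ∼ q) :
    IsSimilarTriangle ε T p := by
  obtain ⟨htri, σ, hσ⟩ := hq
  refine ⟨htri.of_similar h, σ, fun i ↦ ?_⟩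
  simpa only [triAngle, angle_eq_of_similar h] using hσ i

lemma isSimilarTriangle_congr (h : p ∼ q) :
    IsSimilarTriangle ε T p ↔ IsSimilarTriangle ε T q :=
  ⟨fun hp ↦ hp.of_similar h.symm, fun hq ↦ hq.of_similar h⟩

lemma IsTriangle.isSimilarTriangle_self (hε : 0 < ε) (hT : IsTriangle T) :
    IsSimilarTriangle ε T T :=
  ⟨hT, Equiv.refl _, fun i ↦ by simpa using hε⟩

lemma isOpen_setOf_isSimilarTriangle (ε : ℝ) (T : Fin 3 → Plane) :
    IsOpen {p | IsSimilarTriangle ε T p} := by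
  refine isOpen_iff_mem_nhds.2 fun p ⟨htri, σ, hσ⟩ ↦ ?_
  have eventually_isTriangle : ∀ᶠ q in 𝓝 p, IsTriangle q := by
    simp only [← affineIndependent_iff_isTriangle]
    exact isOpen_setOfPred_affineIndependent.mem_nhds (affineIndependent_iff_isTriangle.2 htri)
  have eventually_close (i : Fin 3) : ∀ᶠ q in 𝓝 p, |triAngle q i - triAngle T (σ i)| < ε :=
    ((htri.continuousAt_triAngle i).sub_const _).abs.eventually_lt_const (hσ i)
  filter_upwards [eventually_isTriangle, eventually_all.2 eventually_close] with q hq hclose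
  exact ⟨hq, σ, hclose⟩

lemma similar_const_add {ι E : Type*} [SeminormedAddCommGroup E] (v : E) (p : ι → E) :
    const ι v + p ∼ p :=
  Congruent.similar <| congruent_iff_dist_eq.2 fun i j ↦ by simp

lemma similar_smul {ι E : Type*} [SeminormedAddCommGroup E] [NormedSpace ℝ E] {δ : ℝ}
    (hδ : δ ≠ 0) (p : ι → E) : δ • p ∼ p :=
  similar_iff_exists_pos_dist_eq.2
    ⟨‖δ‖, norm_pos_iff.2 hδ, fun i j ↦ by simp only [Pi.smul_apply, dist_smul₀]⟩

open Classical in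
/-- The ordered triples of points of `P` that are triangles `ε`-similar to `T`; every 3-element
subset counted by `simCount` occurs in all of its six orders. -/
def similarTriples (ε : ℝ) (T : Fin 3 → Plane) (P : Finset Plane) : Finset (Fin 3 → Plane) :=
  {p ∈ Fintype.piFinset fun _ ↦ P | IsSimilarTriangle ε T p}

lemma mem_similarTriples :
    p ∈ similarTriples ε T P ↔ (∀ i, p i ∈ P) ∧ IsSimilarTriangle ε T p := by
  simp [similarTriples]

lemma exists_perm_eq_comp {α β : Type*} [Finite α] {f g : α → β} (hg : Injective g)
    (h : Set.range g ⊆ Set.range f) : ∃ σ : Equiv.Perm α, g = f ∘ σ := by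
  choose σ hσ using fun i ↦ h ⟨i, rfl⟩
  have σ_injective : Injective σ := fun i j hij ↦ hg <| by rw [← hσ i, ← hσ j, hij]
  exact ⟨.ofBijective σ (Finite.injective_iff_bijective.1 σ_injective), funext fun i ↦ (hσ i).symm⟩

lemma card_filter_image_eq_of_mem_similarTriples (hp : p ∈ similarTriples ε T P) :
    #{q ∈ similarTriples ε T P | univ.image q = univ.image p} = 6 := by
  rw [mem_similarTriples] at hp
  have fiber_eq : {q ∈ similarTriples ε T P | univ.image q = univ.image p} =
      univ.image fun σ : Equiv.Perm (Fin 3) ↦ p ∘ σ := by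
    ext q
    simp only [mem_filter, mem_similarTriples, mem_image, mem_univ, true_and]
    constructor
    · rintro ⟨⟨-, hq⟩, himage⟩
      obtain ⟨σ, rfl⟩ := exists_perm_eq_comp (f := p) hq.injective
        (by simpa using (congrArg SetLike.coe himage).subset)
      exact ⟨σ, rfl⟩
    · rintro ⟨σ, rfl⟩
      refine ⟨⟨fun i ↦ hp.1 _, hp.2.comp_perm σ⟩, ?_⟩
      rw [← image_image, image_univ_equiv]
  rw [fiber_eq, card_image_of_injective, card_univ, Fintype.card_perm, Fintype.card_fin]
  · rfl
  · exact fun σ τ h ↦ Equiv.ext fun i ↦ hp.2.injective (congrFun h i)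

lemma simCount_eq_card_image_similarTriples (ε : ℝ) (T : Fin 3 → Plane) (P : Finset Plane) :
    simCount ε T P = #((similarTriples ε T P).image univ.image) := by
  rw [simCount, ← Set.ncard_coe_finset]
  congr 1
  ext S
  simp only [Set.mem_ofPred_eq, coe_image, Set.mem_image, mem_coe, mem_similarTriples]
  constructor
  · rintro ⟨hSP, -, p, hS, hp⟩
    obtain rfl : univ.image p = S := by simpa [← coe_inj] using hS.symm
    exact ⟨p, ⟨fun i ↦ hSP (mem_image_of_mem p (mem_univ i)), hp⟩, rfl⟩
  · rintro ⟨p, ⟨hpP, hp⟩, rfl⟩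
    refine ⟨by simpa [image_subset_iff] using hpP, ?_, p, by simp, hp⟩
    rw [card_image_of_injective _ hp.injective, card_univ, Fintype.card_fin]

lemma card_similarTriples (ε : ℝ) (T : Fin 3 → Plane) (P : Finset Plane) :
    #(similarTriples ε T P) = 6 * simCount ε T P := by
  rw [simCount_eq_card_image_similarTriples, card_eq_sum_card_image univ.image, mul_comm]
  refine sum_const_nat fun S hS ↦ ?_
  obtain ⟨p, hp, rfl⟩ := mem_image.1 hS
  exact card_filter_image_eq_of_mem_similarTriples hp

lemma simCount_eq_choose_of_forall_injective
    (h : ∀ p : Fin 3 → Plane, Injective p → (∀ i, p i ∈ V) → IsSimilarTriangle ε T p) :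
    simCount ε T V = (#V).choose 3 := by
  rw [simCount, ← card_powersetCard, ← Set.ncard_coe_finset]
  congr 1
  ext S
  simp only [Set.mem_ofPred_eq, mem_coe, mem_powersetCard]
  refine ⟨fun hS ↦ ⟨hS.1, hS.2.1⟩, fun ⟨hSV, hcard⟩ ↦ ⟨hSV, hcard, ?_⟩⟩
  let e : Fin 3 ≃ S := (S.equivFinOfCardEq hcard).symm
  refine ⟨Subtype.val ∘ e, by simp [e.surjective.range_comp], ?_⟩
  exact h _ (Subtype.val_injective.comp e.injective) fun i ↦ hSV (e i).2

/-! ### Blow-ups -/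

lemma similarTriples_smul {δ : ℝ} (hδ : δ ≠ 0) :
    similarTriples ε T (δ • P) = δ • similarTriples ε T P := by
  ext p
  rw [← inv_smul_mem_iff₀ hδ, mem_similarTriples, mem_similarTriples,
    isSimilarTriangle_congr (similar_smul (inv_ne_zero hδ) p)]
  simp only [Pi.smul_apply, inv_smul_mem_iff₀ hδ]

lemma exists_nhds_injOn_add {E : Type*} [AddGroup E] [TopologicalSpace E] [ContinuousAdd E]
    [T2Space E] (V : Finset E) :
    ∃ U ∈ 𝓝 (0 : E), Set.InjOn (fun z : E × E ↦ z.1 + z.2) (V ×ˢ U) := by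
  obtain ⟨W, hW, W_disjoint⟩ := V.finite_toSet.t2_separation
  have eventually_mem : ∀ᶠ x in 𝓝 (0 : E), ∀ v ∈ V, v + x ∈ W v := by
    refine (eventually_all_finset V).2 fun v _ ↦ ?_
    exact (continuous_const_add v).tendsto' 0 v (add_zero v) ((hW v).2.mem_nhds (hW v).1)
  refine ⟨_, eventually_mem, ?_⟩
  rintro ⟨v, x⟩ ⟨hv, hx⟩ ⟨w, y⟩ ⟨hw, hy⟩ (h : v + x = w + y)
  obtain rfl : v = w := W_disjoint.elim_set hv hw _ (hx v hv) (h ▸ hy w hw)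
  rw [add_left_cancel h]

lemma exists_nhds_isSimilarTriangle_add (ε : ℝ) (T : Fin 3 → Plane) (V : Finset Plane) :
    ∃ U ∈ 𝓝 (0 : Plane), ∀ p ∈ similarTriples ε T V, ∀ x : Fin 3 → Plane, (∀ i, x i ∈ U) →
      IsSimilarTriangle ε T (p + x) := by
  have eventually_similar : ∀ᶠ x in 𝓝 (0 : Fin 3 → Plane),
      ∀ p ∈ similarTriples ε T V, IsSimilarTriangle ε T (p + x) := by
    refine (eventually_all_finset _).2 fun p hp ↦ ?_
    exact (continuous_const_add p).tendsto' 0 p (add_zero p)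
      ((isOpen_setOf_isSimilarTriangle ε T).mem_nhds (mem_similarTriples.1 hp).2)
  obtain ⟨r, hr, hball⟩ := Metric.eventually_nhds_iff_ball.1 eventually_similar
  refine ⟨Metric.ball 0 r, Metric.ball_mem_nhds 0 hr, fun p hp x hx ↦ hball x ?_ p hp⟩
  simpa [pi_norm_lt_iff hr] using hx

lemma injOn_add_pi {ι α : Type*} [Add α] {A B : Set α}
    (h : Set.InjOn (fun z : α × α ↦ z.1 + z.2) (A ×ˢ B)) :
    Set.InjOn (fun z : (ι → α) × (ι → α) ↦ z.1 + z.2)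
      ((Set.univ.pi fun _ ↦ A) ×ˢ (Set.univ.pi fun _ ↦ B)) := by
  rintro ⟨p, x⟩ ⟨hp, hx⟩ ⟨q, y⟩ ⟨hq, hy⟩ hsum
  have pairs_eq (i : ι) : (p i, x i) = (q i, y i) :=
    h ⟨hp i trivial, hx i trivial⟩ ⟨hq i trivial, hy i trivial⟩ (congrFun hsum i)
  simp only [Prod.mk.injEq, funext_iff] at pairs_eq ⊢
  exact forall_and.1 pairs_eq

lemma coe_similarTriples_subset_pi (ε : ℝ) (T : Fin 3 → Plane) (P : Finset Plane) :
    (similarTriples ε T P : Set (Fin 3 → Plane)) ⊆ Set.univ.pi fun _ ↦ P :=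
  fun _ hp i _ ↦ (mem_similarTriples.1 hp).1 i

lemma coe_image_const_subset_pi {ι α : Type*} [DecidableEq (ι → α)] (V : Finset α) :
    (V.image (const ι) : Set (ι → α)) ⊆ Set.univ.pi fun _ ↦ V := by
  rw [coe_image]
  rintro _ ⟨v, hv, rfl⟩ _ _
  exact hv

lemma disjoint_similarTriples_add_image_const_add (ε : ℝ) (T : Fin 3 → Plane)
    (hinj : Set.InjOn (fun z : Plane × Plane ↦ z.1 + z.2) ((V : Set Plane) ×ˢ (P : Set Plane))) :
    Disjoint (similarTriples ε T V + Fintype.piFinset fun _ ↦ P)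
      (V.image (const (Fin 3)) + similarTriples ε T P) := by
  refine disjoint_left.2 fun _ htransversal hcopy ↦ ?_
  obtain ⟨p, hp, x, hx, rfl⟩ := mem_add.1 htransversal
  obtain ⟨c, hc, q, hq, h⟩ := mem_add.1 hcopy
  obtain ⟨rfl, -⟩ := Prod.mk.inj <| injOn_add_pi hinj
    ⟨coe_image_const_subset_pi V hc, coe_similarTriples_subset_pi ε T P hq⟩
    ⟨coe_similarTriples_subset_pi ε T V hp, (Fintype.coe_piFinset _).subset hx⟩ h
  obtain ⟨v, -, rfl⟩ := mem_image.1 hc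
  exact absurd ((mem_similarTriples.1 hp).2.injective (rfl : _ = v)) zero_ne_one

lemma card_similarTriples_add_le
    (hinj : Set.InjOn (fun z : Plane × Plane ↦ z.1 + z.2) ((V : Set Plane) ×ˢ (P : Set Plane)))
    (hsim : ∀ p ∈ similarTriples ε T V, ∀ x : Fin 3 → Plane, (∀ i, x i ∈ P) →
      IsSimilarTriangle ε T (p + x)) :
    #(similarTriples ε T V) * #P ^ 3 + #V * #(similarTriples ε T P) ≤
      #(similarTriples ε T (V + P)) := by
  have disjoint := disjoint_similarTriples_add_image_const_add ε T hinj
  let transversals := similarTriples ε T V + Fintype.piFinset fun _ ↦ P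
  let copies := V.image (const (Fin 3)) + similarTriples ε T P
  have hinj_pi := injOn_add_pi (ι := Fin 3) hinj
  have card_transversals : #transversals = #(similarTriples ε T V) * #P ^ 3 := by
    rw [card_add_iff.2, Fintype.card_piFinset_const]
    exact hinj_pi.mono
      (Set.prod_mono (coe_similarTriples_subset_pi ε T V) (Fintype.coe_piFinset _).subset)
  have card_copies : #copies = #V * #(similarTriples ε T P) := by
    rw [card_add_iff.2, card_image_of_injective V const_injective]
    exact hinj_pi.mono
      (Set.prod_mono (coe_image_const_subset_pi V) (coe_similarTriples_subset_pi ε T P))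
  have transversals_subset : transversals ⊆ similarTriples ε T (V + P) := by
    refine add_subset_iff.2 fun p hp x hx ↦ mem_similarTriples.2 ?_
    rw [Fintype.mem_piFinset] at hx
    exact ⟨fun i ↦ Finset.add_mem_add ((mem_similarTriples.1 hp).1 i) (hx i), hsim p hp x hx⟩
  have copies_subset : copies ⊆ similarTriples ε T (V + P) := by
    refine add_subset_iff.2 fun c hc p hp ↦ mem_similarTriples.2 ?_
    obtain ⟨v, hv, rfl⟩ := mem_image.1 hc
    rw [mem_similarTriples] at hp
    exact ⟨fun i ↦ Finset.add_mem_add hv (hp.1 i), hp.2.of_similar (similar_const_add v p)⟩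
  rw [← card_transversals, ← card_copies, ← card_union_of_disjoint disjoint]
  exact card_le_card (union_subset transversals_subset copies_subset)

lemma exists_smul_subset {E : Type*} [AddCommGroup E] [Module ℝ E] [TopologicalSpace E]
    [ContinuousSMul ℝ E] [DecidableEq E] (P : Finset E) {U : Set E} (hU : U ∈ 𝓝 0) :
    ∃ δ : ℝ, δ ≠ 0 ∧ ((δ • P : Finset E) : Set E) ⊆ U := by
  have eventually_mem : ∀ᶠ δ in 𝓝[≠] (0 : ℝ), ∀ x ∈ P, δ • x ∈ U := by
    refine nhdsWithin_le_nhds <| (eventually_all_finset P).2 fun x _ ↦ ?_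
    exact (continuous_id.smul continuous_const).tendsto' 0 0 (zero_smul ℝ x) hU
  obtain ⟨δ, hδU, hδ⟩ := (eventually_mem.and eventually_mem_nhdsWithin).exists
  refine ⟨δ, hδ, ?_⟩
  rw [coe_smul_finset]
  rintro _ ⟨x, hx, rfl⟩
  exact hδU x hx

theorem exists_card_eq_mul_and_le_simCount (ε : ℝ) (T : Fin 3 → Plane) (V P : Finset Plane) :
    ∃ Q : Finset Plane, #Q = #V * #P ∧
      simCount ε T V * #P ^ 3 + #V * simCount ε T P ≤ simCount ε T Q := by
  obtain ⟨U₁, hU₁, hinj⟩ := exists_nhds_injOn_add V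
  obtain ⟨U₂, hU₂, hsim⟩ := exists_nhds_isSimilarTriangle_add ε T V
  obtain ⟨δ, hδ, hδU⟩ := exists_smul_subset P (inter_mem hU₁ hU₂)
  have hinj' := hinj.mono (Set.prod_mono_right (hδU.trans Set.inter_subset_left))
  refine ⟨V + δ • P, by rw [card_add_iff.2 hinj', card_smul_finset₀ hδ], ?_⟩
  have le_card := card_similarTriples_add_le hinj' fun p hp x hx ↦
    hsim p hp x fun i ↦ (hδU (hx i)).2
  rw [similarTriples_smul hδ, card_smul_finset₀ hδ, card_smul_finset₀ hδ] at le_card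
  simp only [card_similarTriples] at le_card
  linarith

lemma bddAbove_simCount (n : ℕ) (T : Fin 3 → Plane) (ε : ℝ) :
    BddAbove {m | ∃ P : Finset Plane, #P = n ∧ simCount ε T P = m} := by
  refine ⟨n ^ 3, ?_⟩
  rintro _ ⟨P, rfl, rfl⟩
  calc simCount ε T P ≤ 6 * simCount ε T P := Nat.le_mul_of_pos_left _ (by norm_num)
    _ = #(similarTriples ε T P) := (card_similarTriples ε T P).symm
    _ ≤ #(Fintype.piFinset fun _ : Fin 3 ↦ P) := by classical exact card_filter_le _ _
    _ = #P ^ 3 := Fintype.card_piFinset_const P 3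

lemma simCount_le_hGeo (ε : ℝ) (T : Fin 3 → Plane) (P : Finset Plane) :
    simCount ε T P ≤ hGeo #P T ε :=
  le_csSup (bddAbove_simCount _ T ε) ⟨P, rfl, rfl⟩

lemma exists_simCount_eq_hGeo (n : ℕ) (T : Fin 3 → Plane) (ε : ℝ) :
    ∃ P : Finset Plane, #P = n ∧ simCount ε T P = hGeo n T ε := by
  obtain ⟨P, hP⟩ := Infinite.exists_subset_card_eq Plane n
  have nonempty : {m | ∃ P : Finset Plane, #P = n ∧ simCount ε T P = m}.Nonempty :=
    ⟨_, P, hP, rfl⟩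
  exact Nat.sSup_mem nonempty (bddAbove_simCount n T ε)

lemma simCount_mono (ε : ℝ) (T : Fin 3 → Plane) : Monotone (simCount ε T) := by
  intro P Q hPQ
  have triples_subset : similarTriples ε T P ⊆ similarTriples ε T Q := fun p hp ↦ by
    rw [mem_similarTriples] at hp ⊢
    exact ⟨fun i ↦ hPQ (hp.1 i), hp.2⟩
  have le_six_mul := card_le_card triples_subset
  rw [card_similarTriples, card_similarTriples] at le_six_mul
  lia

lemma hGeo_mono (T : Fin 3 → Plane) (ε : ℝ) : Monotone (hGeo · T ε) := by
  intro m n hmn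
  obtain ⟨P, rfl, hP⟩ := exists_simCount_eq_hGeo m T ε
  obtain ⟨Q, hPQ, rfl⟩ := Infinite.exists_superset_card_eq P n hmn
  exact hP.ge.trans ((simCount_mono ε T hPQ).trans (simCount_le_hGeo ε T Q))

theorem simCount_mul_cube_add_card_mul_hGeo_le (ε : ℝ) (T : Fin 3 → Plane) (V : Finset Plane)
    (m : ℕ) : simCount ε T V * m ^ 3 + #V * hGeo m T ε ≤ hGeo (#V * m) T ε := by
  obtain ⟨P, rfl, hP⟩ := exists_simCount_eq_hGeo m T ε
  obtain ⟨Q, hQ, hle⟩ := exists_card_eq_mul_and_le_simCount ε T V P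
  rw [← hP, ← hQ]
  exact hle.trans (simCount_le_hGeo ε T Q)

lemma cube_sub_sq_le_of_recurrence {f : ℕ → ℝ} (hf : Monotone f) (hf₀ : 0 ≤ f 0) {k : ℕ}
    (hk : 2 ≤ k) {c : ℝ} (hc : 0 ≤ c)
    (hrec : ∀ m : ℕ, c * (k ^ 3 - k) * m ^ 3 + k * f m ≤ f (k * m)) (n : ℕ) :
    c * n ^ 3 - 6 * c * k * n ^ 2 ≤ f n := by
  induction n using Nat.strong_induction_on with
  | _ n ih =>
    rcases n.eq_zero_or_pos with rfl | hn
    · simpa using hf₀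
    let m := n / k
    have km_le : (k * m : ℝ) ≤ n := mod_cast Nat.mul_div_le n k
    have n_le : (n : ℝ) ≤ k * m + k := mod_cast (Nat.lt_mul_div_succ n (by lia)).le
    have k_ge : (2 : ℝ) ≤ k := mod_cast hk
    have cube_diff : (n : ℝ) ^ 3 - (k * m) ^ 3 ≤ 3 * k * n ^ 2 := by
      calc (n : ℝ) ^ 3 - (k * m) ^ 3
          = ((n : ℝ) - k * m) * (n ^ 2 + n * (k * m) + (k * m) ^ 2) := by ring
        _ ≤ (k : ℝ) * (n ^ 2 + n * n + n ^ 2) := by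
            gcongr
            linarith
        _ = 3 * k * n ^ 2 := by ring
    have sq_le : 2 * (k * m ^ 2 : ℝ) ≤ n ^ 2 := by
      calc 2 * (k * m ^ 2 : ℝ) ≤ k * (k * m ^ 2) := by gcongr
        _ = (k * m) ^ 2 := by ring
        _ ≤ n ^ 2 := by gcongr
    calc c * n ^ 3 - 6 * c * k * n ^ 2
        ≤ c * (k * m) ^ 3 - 6 * c * k * (k * m ^ 2) := by
          linarith [mul_le_mul_of_nonneg_left cube_diff hc,
            mul_le_mul_of_nonneg_left sq_le (by positivity : 0 ≤ 3 * c * k)]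
      _ = c * (k ^ 3 - k) * m ^ 3 + k * (c * m ^ 3 - 6 * c * k * m ^ 2) := by ring
      _ ≤ c * (k ^ 3 - k) * m ^ 3 + k * f m := by
          gcongr
          exact ih m (Nat.div_lt_self hn hk)
      _ ≤ f (k * m) := hrec m
      _ ≤ f n := hf (Nat.mul_div_le n k)

/-- The limit of `simCount / n ^ 3` along the iterated blow-ups of `V`, i.e. the solution `c` of
`simCount ε T V + #V * c = c * #V ^ 3`. It is only meaningful for `2 ≤ #V`. -/
def blowUpDensity (ε : ℝ) (T : Fin 3 → Plane) (V : Finset Plane) : ℝ :=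
  simCount ε T V / ((#V : ℝ) ^ 3 - #V)

theorem blowUpDensity_mul_cube_sub_sq_le_hGeo (ε : ℝ) (T : Fin 3 → Plane) (hV : 2 ≤ #V) (n : ℕ) :
    blowUpDensity ε T V * n ^ 3 - 6 * blowUpDensity ε T V * #V * n ^ 2 ≤ hGeo n T ε := by
  have denom_pos : (0 : ℝ) < (#V : ℝ) ^ 3 - #V :=
    sub_pos.2 (lt_self_pow₀ (by exact_mod_cast hV) (by norm_num))
  refine cube_sub_sq_le_of_recurrence (f := fun n ↦ (hGeo n T ε : ℝ))
    (Nat.mono_cast.comp (hGeo_mono T ε)) (Nat.cast_nonneg _) hV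
    (div_nonneg (Nat.cast_nonneg _) denom_pos.le) (fun m ↦ ?_) n
  have density_mul : blowUpDensity ε T V * ((#V : ℝ) ^ 3 - #V) = simCount ε T V :=
    div_mul_cancel₀ _ denom_pos.ne'
  change blowUpDensity ε T V * _ * _ + _ ≤ _
  rw [density_mul]
  exact_mod_cast simCount_mul_cube_add_card_mul_hGeo_le ε T V m

/-! ### Rectangles -/

section Rectangle

variable {E : Type*} [NormedAddCommGroup E] [InnerProductSpace ℝ E] {c u w : E}

/-- The corners `c ± u ± w` of the parallelogram with centre `c`, a rectangle when `u` and `w` are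
orthogonal. Indexing them by pairs of signs turns the symmetries into multiplications. -/
def rectangleCorner (c u w : E) (s : ℤˣ × ℤˣ) : E :=
  c + ((s.1 : ℤ) : ℝ) • u + ((s.2 : ℤ) : ℝ) • w

lemma dist_rectangleCorner_sq (huw : inner ℝ u w = 0) (s t : ℤˣ × ℤˣ) :
    dist (rectangleCorner c u w s) (rectangleCorner c u w t) ^ 2 =
      ((s.1 : ℤ) - (t.1 : ℤ) : ℝ) ^ 2 * ‖u‖ ^ 2 + ((s.2 : ℤ) - (t.2 : ℤ) : ℝ) ^ 2 * ‖w‖ ^ 2 := by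
  have sub_eq : rectangleCorner c u w s - rectangleCorner c u w t =
      ((s.1 : ℤ) - (t.1 : ℤ) : ℝ) • u + ((s.2 : ℤ) - (t.2 : ℤ) : ℝ) • w := by
    simp only [rectangleCorner]
    module
  have orthogonal : inner ℝ (((s.1 : ℤ) - (t.1 : ℤ) : ℝ) • u) (((s.2 : ℤ) - (t.2 : ℤ) : ℝ) • w) =
      0 := by
    rw [inner_smul_left, inner_smul_right, huw, mul_zero, mul_zero]
  rw [dist_eq_norm, sub_eq, norm_add_sq_real, orthogonal, norm_smul, norm_smul, mul_pow, mul_pow,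
    Real.norm_eq_abs, Real.norm_eq_abs, sq_abs, sq_abs, mul_zero, add_zero]

lemma rectangleCorner_comp_mul_left_congruent (huw : inner ℝ u w = 0) (g : ℤˣ × ℤˣ) :
    rectangleCorner c u w ∘ (g * ·) ≅ rectangleCorner c u w := by
  refine congruent_iff_dist_eq.2 fun s t ↦ (sq_eq_sq₀ dist_nonneg dist_nonneg).1 ?_
  have sq_sub_eq (a b b' : ℤˣ) :
      (((a * b : ℤˣ) : ℤ) - ((a * b' : ℤˣ) : ℤ) : ℝ) ^ 2 = ((b : ℤ) - (b' : ℤ) : ℝ) ^ 2 := by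
    rcases Int.units_eq_one_or a with rfl | rfl
    · simp only [one_mul]
    · push_cast
      ring
  simp only [comp_apply, dist_rectangleCorner_sq huw, Prod.fst_mul, Prod.snd_mul, sq_sub_eq]

lemma rectangleCorner_injective (huw : inner ℝ u w = 0) (hu : u ≠ 0) (hw : w ≠ 0) :
    Injective (rectangleCorner c u w) := by
  intro s t hst
  have sum_eq_zero := dist_rectangleCorner_sq (c := c) huw s t
  rw [hst, dist_self, zero_pow two_ne_zero, eq_comm,
    add_eq_zero_iff_of_nonneg (by positivity) (by positivity)] at sum_eq_zero
  simpa [hu, hw, sub_eq_zero, Units.val_inj, Prod.ext_iff] using sum_eq_zero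

/-- Three of the four corners of `rectangleCorner`, the first one being the apex of the right
angle. -/
def threeCorners : Fin 3 → ℤˣ × ℤˣ :=
  ![(1, 1), (-1, 1), (1, -1)]

lemma exists_mul_eq_threeCorners (e : Fin 3 → ℤˣ × ℤˣ) (he : Injective e) :
    ∃ (g : ℤˣ × ℤˣ) (σ : Equiv.Perm (Fin 3)), (g * ·) ∘ e = threeCorners ∘ σ := by
  decide +revert

lemma exists_rectangleCorner_comp_congruent (huw : inner ℝ u w = 0) {e : Fin 3 → ℤˣ × ℤˣ}
    (he : Injective e) : ∃ σ : Equiv.Perm (Fin 3),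
      rectangleCorner c u w ∘ e ≅ rectangleCorner c u w ∘ threeCorners ∘ σ := by
  obtain ⟨g, σ, hσ⟩ := exists_mul_eq_threeCorners e he
  refine ⟨σ, ?_⟩
  rw [← hσ]
  exact ((rectangleCorner_comp_mul_left_congruent huw g).index_map e).symm

lemma exists_rectangleCorner_comp_threeCorners_eq {t : Fin 3 → E} (ht : Injective t)
    (hright : ∠ (t 1) (t 0) (t 2) = Real.pi / 2) :
    ∃ c u w : E, inner ℝ u w = 0 ∧ u ≠ 0 ∧ w ≠ 0 ∧ rectangleCorner c u w ∘ threeCorners = t := by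
  have orthogonal : inner ℝ (t 1 - t 0) (t 2 - t 0) = 0 :=
    InnerProductGeometry.inner_eq_zero_iff_angle_eq_pi_div_two _ _ |>.2 hright
  refine ⟨midpoint ℝ (t 1) (t 2), (2⁻¹ : ℝ) • (t 0 - t 1), (2⁻¹ : ℝ) • (t 0 - t 2), ?_,
    smul_ne_zero (by norm_num) (sub_ne_zero.2 (ht.ne (by decide))),
    smul_ne_zero (by norm_num) (sub_ne_zero.2 (ht.ne (by decide))), ?_⟩
  · rw [inner_smul_left, inner_smul_right, ← neg_sub (t 1), ← neg_sub (t 2), inner_neg_neg,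
      orthogonal, mul_zero, mul_zero]
  · ext1 j
    fin_cases j <;>
      simp [rectangleCorner, threeCorners, midpoint_eq_smul_add] <;> module

end Rectangle

lemma exists_card_eq_four_and_simCount_eq_four (hε : 0 < ε) (hT : IsTriangle T) {i : Fin 3}
    (hright : triAngle T i = Real.pi / 2) :
    ∃ V : Finset Plane, #V = 4 ∧ simCount ε T V = 4 := by
  let ρ : Equiv.Perm (Fin 3) := Equiv.addLeft i
  have apex_angle : ∠ ((T ∘ ρ) 1) ((T ∘ ρ) 0) ((T ∘ ρ) 2) = Real.pi / 2 := by
    simpa [ρ, triAngle] using hright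
  obtain ⟨c, u, w, huw, hu, hw, hcorners⟩ :=
    exists_rectangleCorner_comp_threeCorners_eq (hT.comp_perm ρ).injective apex_angle
  have card_corners : #(univ.image (rectangleCorner c u w)) = 4 :=
    card_image_of_injective univ (rectangleCorner_injective huw hu hw)
  refine ⟨_, card_corners, ?_⟩
  rw [simCount_eq_choose_of_forall_injective, card_corners]
  · rfl
  intro p hp hmem
  obtain ⟨e, rfl⟩ : ∃ e, p = rectangleCorner c u w ∘ e := by
    simp only [mem_image, mem_univ, true_and] at hmem
    choose e he using hmem
    exact ⟨e, funext fun j ↦ (he j).symm⟩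
  obtain ⟨σ, hσ⟩ := exists_rectangleCorner_comp_congruent (c := c) huw hp.of_comp
  rw [← comp_assoc, hcorners] at hσ
  exact (((hT.isSimilarTriangle_self hε).comp_perm ρ).comp_perm σ).of_similar hσ.similar

end SimilarTriangles

/-- For every right-angled non-degenerate triangle `T` and every `ε > 0` there is
`C > 0` with `h(n, T, ε) ≥ n³/15 - C·n²` for every `n`. -/
theorem stmt_8 (T : Fin 3 → Plane) (hT : IsTriangle T)
    (hright : ∃ i : Fin 3, triAngle T i = Real.pi / 2) (ε : ℝ) (hε : 0 < ε) :
    ∃ C : ℝ, 0 < C ∧ ∀ n : ℕ,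
      (n : ℝ) ^ 3 / 15 - C * (n : ℝ) ^ 2 ≤ (hGeo n T ε : ℝ) := by
  obtain ⟨i, hi⟩ := hright
  obtain ⟨V, hcard, hcount⟩ := exists_card_eq_four_and_simCount_eq_four hε hT hi
  have density : blowUpDensity ε T V = 1 / 15 := by norm_num [blowUpDensity, hcard, hcount]
  refine ⟨8 / 5, by norm_num, fun n ↦ ?_⟩
  have lower_bound := blowUpDensity_mul_cube_sub_sq_le_hGeo ε T (V := V) (by lia) n
  rw [density, hcard] at lower_bound
  push_cast at lower_bound
  linarith

end
end

section
/- For almost every pair (α, β) (with respect to Lebesgue measure on the set {(α, β) ∈ ℝ² : α > 0, β > 0, α + β < π}), the triangle T with angles α, β and π − α − β has the following property: there exists ε > 0 such that limsup_{n→∞} h(n, T, ε)/C(n, 3) ≤ 0.25108. -/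
open EuclideanGeometry

noncomputable section

/-!
Identify the plane with `ℂ`. A triangle `a b d` with angles `α` at `a` and `β` at `b` satisfies
`d - a = w (b - a)` with `w` or its conjugate equal to `apexRatio α β`. For almost every `(α, β)`
the numbers `w / conj w = exp (2iα)` and `conj w` are algebraically independent, so some valuation
ring of `ℂ` has residue characteristic `3` and `w ≡ conj w ≡ -1`. Rescaling a finite configuration
to have diameter `1` for this valuation and reducing it gives a nonconstant colouring `c` by the
residue field, and the relation above becomes `c a + c b + c d = 0`; a linear functional makes the
colours lie in `ZMod 3`. By compactness this persists, for configurations of at most `N` points,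
when the angles are only approximately `α` and `β`.

Three elements of `ZMod 3` with sum zero are all equal or all distinct. Hence a similar triple is
either contained in a colour class or meets all three of them, and induction on the number of points
together with the inequality `24 x y z + x³ + y³ + z³ ≤ (x + y + z)³` bounds the number of similar
triples among `n ≤ N` points by `(n³ - n) / 24`. Averaging over the `N`-point subsets transfers the
density, which tends to `1 / 4` as `N` grows, to all larger sets.
-/

section Triples

open Finset

variable {ι : Type*}

open Classical in
/-- The edges that the `r`-uniform hypergraph with edge predicate `E` induces on the vertex
set `Q`. -/
def inducedEdges (r : ℕ) (E : Finset ι → Prop) (Q : Finset ι) : Finset (Finset ι) :=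
  {S ∈ Q.powersetCard r | E S}

@[simp]
theorem mem_inducedEdges {r : ℕ} {E : Finset ι → Prop} {Q S : Finset ι} :
    S ∈ inducedEdges r E Q ↔ (S ⊆ Q ∧ #S = r) ∧ E S := by
  simp [inducedEdges]

theorem sum_card_inducedEdges_powersetCard (r : ℕ) (E : Finset ι → Prop) (P : Finset ι) {N : ℕ}
    (hrN : r ≤ N) :
    ∑ Q ∈ P.powersetCard N, #(inducedEdges r E Q) =
      #(inducedEdges r E P) * (#P - r).choose (N - r) := by
  classical
  have edges_of_subset : ∀ Q ∈ P.powersetCard N,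
      #(inducedEdges r E Q) = #{S ∈ inducedEdges r E P | S ⊆ Q} := by
    intro Q hQ
    congr 1
    ext S
    have := (mem_powersetCard.1 hQ).1
    simp only [mem_inducedEdges, mem_filter]
    exact ⟨fun h => ⟨⟨⟨h.1.1.trans this, h.1.2⟩, h.2⟩, h.1.1⟩,
      fun h => ⟨⟨h.2, h.1.1.2⟩, h.1.2⟩⟩
  have card_supersets : ∀ S ∈ inducedEdges r E P,
      #{Q ∈ P.powersetCard N | S ⊆ Q} = (#P - r).choose (N - r) := by
    intro S hS
    obtain ⟨⟨hSP, rfl⟩, -⟩ := mem_inducedEdges.1 hS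
    exact card_filter_powersetCard_subset S P N hSP hrN
  rw [sum_congr rfl edges_of_subset, ← smul_eq_mul, ← sum_const, ← sum_congr rfl card_supersets]
  exact sum_card_bipartiteAbove_eq_sum_card_bipartiteBelow fun Q S : Finset ι => S ⊆ Q

theorem card_inducedEdges_le_mul_choose {r N : ℕ} {E : Finset ι → Prop} {B : ℝ} (hrN : r ≤ N)
    (hB : ∀ Q : Finset ι, #Q = N → (#(inducedEdges r E Q) : ℝ) ≤ B * N.choose r)
    {P : Finset ι} (hP : N ≤ #P) :
    (#(inducedEdges r E P) : ℝ) ≤ B * (#P).choose r := by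
  have choose_pos : (0 : ℝ) < (#P - r).choose (N - r) :=
    mod_cast Nat.choose_pos (Nat.sub_le_sub_right hP r)
  refine le_of_mul_le_mul_right ?_ choose_pos
  calc (#(inducedEdges r E P) : ℝ) * (#P - r).choose (N - r)
      = ∑ Q ∈ P.powersetCard N, (#(inducedEdges r E Q) : ℝ) :=
        mod_cast (sum_card_inducedEdges_powersetCard r E P hrN).symm
    _ ≤ ∑ _Q ∈ P.powersetCard N, B * N.choose r :=
        sum_le_sum fun Q hQ => hB Q (mem_powersetCard.1 hQ).2
    _ = B * ((#P).choose N * N.choose r : ℕ) := by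
        rw [sum_const, card_powersetCard, nsmul_eq_mul]; push_cast; ring
    _ = B * (#P).choose r * (#P - r).choose (N - r) := by
        rw [Nat.choose_mul hrN]; push_cast; ring

/-- A colouring by `ZMod 3` that is not constant on `Q` and for which the colours of every triple
of `Q` satisfying `E` add up to zero, i.e. are all equal or all distinct. -/
structure IsZeroSumColoring (E : Finset ι → Prop) (Q : Finset ι) (c : ι → ZMod 3) : Prop where
  nonconstant : ∃ i ∈ Q, ∃ j ∈ Q, c i ≠ c j
  sum_eq_zero : ∀ S ∈ inducedEdges 3 E Q, ∑ i ∈ S, c i = 0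

theorem injOn_or_constant_of_sum_eq_zero {S : Finset ι} {c : ι → ZMod 3} (hS : #S = 3)
    (hc : ∑ i ∈ S, c i = 0) : Set.InjOn c S ∨ ∃ u, ∀ i ∈ S, c i = u := by
  classical
  obtain ⟨x, y, z, hxy, hxz, hyz, rfl⟩ := card_eq_three.1 hS
  have dichotomy : ∀ u v w : ZMod 3, u + (v + w) = 0 →
      (u = w ∧ v = w) ∨ (u ≠ v ∧ u ≠ w ∧ v ≠ w) := by decide
  rw [sum_insert (by simp [hxy, hxz]), sum_pair hyz] at hc
  obtain ⟨hu, hv⟩ | ⟨huv, huw, hvw⟩ := dichotomy _ _ _ hc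
  · exact .inr ⟨c z, by simp [hu, hv]⟩
  · left
    simp [Set.InjOn, huv, huw, hvw, huv.symm, huw.symm, hvw.symm]

theorem exists_image_eq_of_injOn [DecidableEq ι] {κ : Type*} [Fintype κ] {S : Finset ι} {c : ι → κ}
    (hS : #S = Fintype.card κ) (hc : Set.InjOn c S) :
    ∃ x : κ → ι, (∀ u, c (x u) = u) ∧ univ.image x = S := by
  classical
  have colors_univ : S.image c = univ :=
    eq_univ_of_card _ (by rw [card_image_of_injOn hc, hS])
  choose x hxS hxc using fun u => mem_image.1 (colors_univ ▸ mem_univ u : u ∈ S.image c)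
  refine ⟨x, hxc, eq_of_subset_of_card_le (image_subset_iff.2 fun u _ => hxS u) ?_⟩
  rw [card_image_of_injective _ (Function.LeftInverse.injective hxc), hS, card_univ]

theorem IsZeroSumColoring.card_inducedEdges_le {E : Finset ι → Prop} {Q : Finset ι}
    {c : ι → ZMod 3} (hc : IsZeroSumColoring E Q c) :
    #(inducedEdges 3 E Q) ≤
      ∑ u, #(inducedEdges 3 E {i ∈ Q | c i = u}) + ∏ u, #{i ∈ Q | c i = u} := by
  classical
  let A (u : ZMod 3) : Finset ι := {i ∈ Q | c i = u}
  have covered : inducedEdges 3 E Q ⊆ (univ.biUnion fun u => inducedEdges 3 E (A u)) ∪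
      (Fintype.piFinset A).image fun x => univ.image x := by
    intro S hS
    obtain ⟨⟨hSQ, hS3⟩, hSE⟩ := mem_inducedEdges.1 hS
    obtain rainbow | ⟨u, hu⟩ := injOn_or_constant_of_sum_eq_zero hS3 (hc.sum_eq_zero S hS)
    · obtain ⟨x, hxc, rfl⟩ := exists_image_eq_of_injOn (by rw [hS3, ZMod.card]) rainbow
      refine mem_union_right _ (mem_image_of_mem _ (Fintype.mem_piFinset.2 fun u => ?_))
      exact mem_filter.2 ⟨hSQ (mem_image_of_mem x (mem_univ u)), hxc u⟩
    · refine mem_union_left _ (mem_biUnion.2 ⟨u, mem_univ u, ?_⟩)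
      exact mem_inducedEdges.2 ⟨⟨fun i hi => mem_filter.2 ⟨hSQ hi, hu i hi⟩, hS3⟩, hSE⟩
  calc #(inducedEdges 3 E Q)
      ≤ _ := (card_le_card covered).trans (card_union_le _ _)
    _ ≤ _ := add_le_add card_biUnion_le (card_image_le.trans (Fintype.card_piFinset A).le)

theorem IsZeroSumColoring.filter_ssubset {E : Finset ι → Prop} {Q : Finset ι} {c : ι → ZMod 3}
    (hc : IsZeroSumColoring E Q c) (u : ZMod 3) : {i ∈ Q | c i = u} ⊂ Q := by
  obtain ⟨i, hi, j, hj, hij⟩ := hc.nonconstant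
  rw [Finset.filter_ssubset]
  by_cases hiu : c i = u
  · exact ⟨j, hj, fun hju => hij (hiu.trans hju.symm)⟩
  · exact ⟨i, hi, hiu⟩

theorem mul_mul_add_pow_three_le {R : Type*} [CommRing R] [LinearOrder R] [IsStrictOrderedRing R]
    {a b c : R} (ha : 0 ≤ a) (hb : 0 ≤ b) (hc : 0 ≤ c) :
    24 * (a * b * c) + (a ^ 3 + b ^ 3 + c ^ 3) ≤ (a + b + c) ^ 3 := by
  linarith [mul_nonneg ha (sq_nonneg (b - c)), mul_nonneg hb (sq_nonneg (c - a)),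
    mul_nonneg hc (sq_nonneg (a - b))]

theorem prod_add_sum_pow_three_le (a : ZMod 3 → ℕ) :
    24 * ∏ u, a u + ∑ u, a u ^ 3 ≤ (∑ u, a u) ^ 3 := by
  have h := mul_mul_add_pow_three_le (Int.natCast_nonneg (a 0)) (Int.natCast_nonneg (a 1))
    (Int.natCast_nonneg (a 2))
  have prod_eq : ∏ u, a u = a 0 * a 1 * a 2 := Fin.prod_univ_three a
  have sum_eq (f : ZMod 3 → ℕ) : ∑ u, f u = f 0 + f 1 + f 2 := Fin.sum_univ_three f
  rw [prod_eq, sum_eq, sum_eq]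
  exact_mod_cast h

theorem card_inducedEdges_add_card_le {E : Finset ι → Prop} (Q : Finset ι)
    (hcol : ∀ Q' ⊆ Q, Q'.Nontrivial → ∃ c, IsZeroSumColoring E Q' c) :
    24 * #(inducedEdges 3 E Q) + #Q ≤ #Q ^ 3 := by
  induction Q using Finset.strongInduction with
  | H Q ih =>
    by_cases hQ : Q.Nontrivial
    · obtain ⟨c, hc⟩ := hcol Q Subset.rfl hQ
      let A (u : ZMod 3) : Finset ι := {i ∈ Q | c i = u}
      have sum_card : ∑ u, #(A u) = #Q :=
        (card_eq_sum_card_fiberwise fun i _ => mem_univ (c i)).symm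
      have classes : ∀ u, 24 * #(inducedEdges 3 E (A u)) + #(A u) ≤ #(A u) ^ 3 := fun u =>
        ih (A u) (hc.filter_ssubset u) fun Q' hQ' => hcol Q' (hQ'.trans (filter_subset _ _))
      calc 24 * #(inducedEdges 3 E Q) + #Q
          ≤ 24 * (∑ u, #(inducedEdges 3 E (A u)) + ∏ u, #(A u)) + ∑ u, #(A u) := by
            gcongr
            exacts [hc.card_inducedEdges_le, sum_card.ge]
        _ = 24 * ∏ u, #(A u) + ∑ u, (24 * #(inducedEdges 3 E (A u)) + #(A u)) := by
            rw [sum_add_distrib, ← mul_sum]; ring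
        _ ≤ 24 * ∏ u, #(A u) + ∑ u, #(A u) ^ 3 := by
            gcongr with u
            exact classes u
        _ ≤ #Q ^ 3 := sum_card ▸ prod_add_sum_pow_three_le fun u => #(A u)
    · have hQ1 : #Q ≤ 1 := by
        rwa [← not_lt, one_lt_card_iff_nontrivial]
      have no_edges : inducedEdges 3 E Q = ∅ := by
        rw [inducedEdges, powersetCard_eq_empty.2 (by omega), filter_empty]
      rw [no_edges, card_empty]
      interval_cases #Q <;> simp

end Triples

section Valuation

open IsLocalRing

variable {K : Type*} [Field K]

theorem exists_valuationSubring_of_algebraicIndependent {R F ι : Type*} [CommRing R] [Algebra R K]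
    [Ring F] [Nontrivial F] {x : ι → K} (hx : AlgebraicIndependent R x)
    (φ : MvPolynomial ι R →+* F) :
    ∃ B : ValuationSubring K, ∀ P, φ P = 0 → MvPolynomial.aeval x P ∈ B.nonunits := by
  let f : MvPolynomial ι R →+* K := (MvPolynomial.aeval x).toRingHom
  have map_ker_ne_top : (RingHom.ker φ).map f.rangeRestrict ≠ ⊤ := by
    rw [Ideal.ne_top_iff_one, Ideal.mem_map_iff_of_surjective _ f.rangeRestrict_surjective]
    rintro ⟨P, hP, hP1⟩
    obtain rfl : P = 1 := hx (congrArg Subtype.val hP1 |>.trans (map_one f).symm)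
    exact one_ne_zero ((map_one φ).symm.trans hP)
  obtain ⟨B, -, hB⟩ := Ideal.image_subset_nonunits_valuationSubring _ map_ker_ne_top
  exact ⟨B, fun P hP => hB ⟨f.rangeRestrict P, Ideal.mem_map_of_mem _ hP, rfl⟩⟩

theorem exists_valuationSubring_mul_and_self_residue_eq_neg_one {q y : K}
    (h : AlgebraicIndependent ℤ ![q, y]) :
    ∃ B : ValuationSubring K,
      3 ∈ B.nonunits ∧ q * y + 1 ∈ B.nonunits ∧ y + 1 ∈ B.nonunits := by
  let φ : MvPolynomial (Fin 2) ℤ →+* ZMod 3 :=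
    MvPolynomial.eval₂Hom (Int.castRingHom (ZMod 3)) ![1, -1]
  obtain ⟨B, hB⟩ := exists_valuationSubring_of_algebraicIndependent h φ
  refine ⟨B, ?_, ?_, ?_⟩
  · simpa using hB 3 (by rw [map_ofNat]; decide)
  · simpa using hB (.X 0 * .X 1 + 1) (by simp [φ])
  · simpa using hB (.X 1 + 1) (by simp [φ])

variable (B : ValuationSubring K) {ι : Type*} [Finite ι] {p : ι → K}

theorem residue_eq_zero_iff_mem_nonunits {B : ValuationSubring K} {x : B} :
    residue B x = 0 ↔ (x : K) ∈ B.nonunits := by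
  rw [residue_eq_zero_iff, ValuationSubring.coe_mem_nonunits_iff]

theorem exists_residue_coloring (hp : ∃ i j, p i ≠ p j) :
    ∃ c : ι → ResidueField B, (∃ i j, c i ≠ c j) ∧
      ∀ (w : B) (a b d : ι), p d - p a = w * (p b - p a) →
        c d - c a = residue B w * (c b - c a) := by
  obtain ⟨i, j, hij⟩ := hp
  have : Nonempty ι := ⟨i⟩
  obtain ⟨⟨i₀, j₀⟩, hmax⟩ :=
    Finite.exists_max fun t : ι × ι => B.valuation (p t.1 - p t.2)
  have diam_ne_zero : p i₀ - p j₀ ≠ 0 := by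
    intro h0
    have := hmax (i, j)
    simp only [h0, map_zero, le_zero_iff, map_eq_zero] at this
    exact hij (sub_eq_zero.1 this)
  have rescaled_mem : ∀ i, (p i - p j₀) / (p i₀ - p j₀) ∈ B := fun i => by
    rw [← B.valuation_le_one_iff, map_div₀]
    exact div_le_one_of_le₀ (hmax (i, j₀)) zero_le
  let r : ι → B := fun i => ⟨_, rescaled_mem i⟩
  refine ⟨fun i => residue B (r i), ⟨i₀, j₀, ?_⟩, fun w a b d h => ?_⟩
  · have hi₀ : r i₀ = 1 := Subtype.ext (div_self diam_ne_zero)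
    have hj₀ : r j₀ = 0 := Subtype.ext (by simp [r])
    simp [hi₀, hj₀]
  · have relation : r d - r a = w * (r b - r a) := by
      apply Subtype.ext
      simp only [r]
      push_cast
      field_simp
      linear_combination h
    simpa using congrArg (residue B) relation

theorem exists_zmod_three_coloring (h3 : 3 ∈ B.nonunits) (hp : ∃ i j, p i ≠ p j) :
    ∃ c : ι → ZMod 3, (∃ i j, c i ≠ c j) ∧
      ∀ w : K, w + 1 ∈ B.nonunits → ∀ a b d, p d - p a = w * (p b - p a) →
        c a + c b + c d = 0 := by
  obtain ⟨c, ⟨i, j, hij⟩, hc⟩ := exists_residue_coloring B hp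
  have three_eq_zero : (3 : ResidueField B) = 0 := by
    rw [← map_ofNat (residue B) 3]
    exact residue_eq_zero_iff_mem_nonunits.2 h3
  let _ : Module (ZMod 3) (ResidueField B) :=
    AddCommGroup.zmodModule fun u => by simp [three_eq_zero]
  obtain ⟨ψ, hψ⟩ := Module.Projective.exists_dual_ne_zero (ZMod 3) (sub_ne_zero.2 hij)
  refine ⟨fun i => ψ (c i), ⟨i, j, by rwa [map_sub, sub_ne_zero] at hψ⟩, fun w hw a b d h => ?_⟩
  have hwB : w ∈ B := by
    simpa using sub_mem (B.nonunits_subset hw) B.one_mem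
  have residue_w : residue B ⟨w, hwB⟩ + 1 = 0 := by
    rw [← map_one (residue B), ← map_add]
    exact residue_eq_zero_iff_mem_nonunits.2 hw
  have sum_eq_zero : c a + c b + c d = 0 := by
    linear_combination hc ⟨w, hwB⟩ a b d h + (c b - c a) * residue_w + c a * three_eq_zero
  rw [← map_add, ← map_add, sum_eq_zero, map_zero]

end Valuation

section Compactness

open Filter Topology

/-- The point `d` agrees with `a + w * (b - a)`, the apex over the base `a`, `b` prescribed by
`w`, up to an error of `δ` relative to the length of the base. -/
def IsApproxApex (δ : ℝ) (w a b d : ℂ) : Prop :=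
  ‖(d - a) - w * (b - a)‖ ≤ δ * ‖b - a‖

theorem isApproxApex_mul_sub {δ : ℝ} {w s : ℂ} (hs : s ≠ 0) (t a b d : ℂ) :
    IsApproxApex δ w (s * (a - t)) (s * (b - t)) (s * (d - t)) ↔ IsApproxApex δ w a b d := by
  have apex_eq : s * (d - t) - s * (a - t) - w * (s * (b - t) - s * (a - t)) =
      s * ((d - a) - w * (b - a)) := by ring
  have base_eq : s * (b - t) - s * (a - t) = s * (b - a) := by ring
  rw [IsApproxApex, apex_eq, base_eq, norm_mul, norm_mul, mul_left_comm,
    mul_le_mul_iff_right₀ (norm_pos_iff.2 hs), IsApproxApex]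

/-- A nonconstant colouring by `ZMod 3` of the points of a configuration `p` for which the colours
of `p a`, `p b`, `p d` add up to zero whenever `p d` is `δ`-close to an apex over `p a`, `p b`
prescribed by some `w ∈ W`. -/
structure IsApexColoring {ι : Type*} (W : Set ℂ) (δ : ℝ) (p : ι → ℂ) (c : ι → ZMod 3) : Prop where
  nonconstant : ∃ i j, c i ≠ c j
  sum_eq_zero : ∀ w ∈ W, ∀ a b d, IsApproxApex δ w (p a) (p b) (p d) → c a + c b + c d = 0

variable {W : Set ℂ}

theorem isApexColoring_mul_sub {ι : Type*} {δ : ℝ} {p : ι → ℂ} {c : ι → ZMod 3} {s : ℂ}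
    (hs : s ≠ 0) (t : ℂ) :
    IsApexColoring W δ (fun i => s * (p i - t)) c ↔ IsApexColoring W δ p c := by
  constructor <;> rintro ⟨hne, hsum⟩ <;> refine ⟨hne, ?_⟩ <;>
    simpa only [isApproxApex_mul_sub hs t] using hsum

theorem IsApexColoring.comp_equiv {ι κ : Type*} {δ : ℝ} {p : ι → ℂ} (e : κ ≃ ι) {c : κ → ZMod 3}
    (hc : IsApexColoring W δ (p ∘ e) c) : IsApexColoring W δ p (c ∘ e.symm) := by
  obtain ⟨⟨i, j, hij⟩, hsum⟩ := hc
  refine ⟨⟨e i, e j, by simpa using hij⟩, fun w hw a b d h => ?_⟩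
  exact hsum w hw _ _ _ (by simpa using h)

variable {B : ValuationSubring ℂ}

theorem eventually_exists_isApexColoring_near (h3 : 3 ∈ B.nonunits) (hfin : W.Finite)
    (hW : ∀ w ∈ W, w + 1 ∈ B.nonunits)
    {ι : Type*} [Finite ι] {p : ι → ℂ} (hp : ∃ i j, p i ≠ p j) :
    ∀ᶠ z : ℝ × (ι → ℂ) in 𝓝 (0, p), ∃ c, IsApexColoring W z.1 z.2 c := by
  obtain ⟨c, hne, hc⟩ := exists_zmod_three_coloring B h3 hp
  suffices ∀ᶠ z : ℝ × (ι → ℂ) in 𝓝 (0, p), ∀ w ∈ W, ∀ a b d, c a + c b + c d ≠ 0 →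
      ¬ IsApproxApex z.1 w (z.2 a) (z.2 b) (z.2 d) by
    filter_upwards [this] with z hz
    exact ⟨c, hne, fun w hw a b d h => by_contra fun hsum => hz w hw a b d hsum h⟩
  simp only [hfin.eventually_all, eventually_all, IsApproxApex, not_le]
  intro w hw a b d hsum
  have not_apex : p d - p a - w * (p b - p a) ≠ 0 := fun h =>
    hsum (hc w (hW w hw) a b d (sub_eq_zero.1 h))
  refine ContinuousAt.eventually_lt (by fun_prop) (by fun_prop) ?_
  simpa using not_apex

theorem eventually_exists_isApexColoring (h3 : 3 ∈ B.nonunits) (hfin : W.Finite)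
    (hW : ∀ w ∈ W, w + 1 ∈ B.nonunits) (ι : Type*) [Finite ι] :
    ∀ᶠ δ : ℝ in 𝓝 0, ∀ p : ι → ℂ, (∃ i j, p i ≠ p j) → ∃ c, IsApexColoring W δ p c := by
  have := Fintype.ofFinite ι
  rcases isEmpty_or_nonempty ι with _ | ⟨⟨i₀⟩⟩
  · exact .of_forall fun _ p ⟨i, _⟩ => isEmptyElim i
  let normalized : Set (ι → ℂ) := Metric.sphere 0 1 ∩ {p | p i₀ = 0}
  have isCompact_normalized : IsCompact normalized :=
    (isCompact_sphere 0 1).inter_right (isClosed_eq (continuous_apply i₀) continuous_const)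
  have nonconstant_of_normalized : ∀ p ∈ normalized, ∃ i j, p i ≠ p j := by
    rintro p ⟨hp1, hp0 : p i₀ = 0⟩
    obtain ⟨i, hi⟩ := Function.ne_iff.1 (ne_zero_of_mem_unit_sphere ⟨p, hp1⟩)
    exact ⟨i, i₀, hp0 ▸ hi⟩
  filter_upwards [isCompact_normalized.eventually_forall_of_forall_eventually
    (P := fun δ p => ∃ c, IsApexColoring W δ p c) fun p hp =>
    eventually_exists_isApexColoring_near h3 hfin hW (nonconstant_of_normalized p hp)]
    with δ hδ p ⟨i, j, hij⟩
  let g : ι → ℂ := fun i => p i - p i₀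
  have hg : g ≠ 0 := fun h => hij (sub_left_injective ((congrFun h i).trans (congrFun h j).symm))
  have hs : ((‖g‖⁻¹ : ℝ) : ℂ) ≠ 0 := by simpa using hg
  have rescaled_mem : (fun i => ((‖g‖⁻¹ : ℝ) : ℂ) * (p i - p i₀)) ∈ normalized := by
    refine ⟨?_, by simp⟩
    change ((‖g‖⁻¹ : ℝ) : ℂ) • g ∈ _
    rw [mem_sphere_zero_iff_norm, norm_smul, Complex.norm_real, norm_inv, norm_norm,
      inv_mul_cancel₀ (norm_ne_zero_iff.2 hg)]
  obtain ⟨c, hc⟩ := hδ _ rescaled_mem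
  exact ⟨c, (isApexColoring_mul_sub hs _).1 hc⟩

theorem exists_delta_forall_exists_isApexColoring (h3 : 3 ∈ B.nonunits) (hfin : W.Finite)
    (hW : ∀ w ∈ W, w + 1 ∈ B.nonunits) (N : ℕ) :
    ∃ δ > 0, ∀ (ι : Type*) [Finite ι], Nat.card ι ≤ N →
      ∀ p : ι → ℂ, (∃ i j, p i ≠ p j) → ∃ c, IsApexColoring W δ p c := by
  have ev : ∀ᶠ δ : ℝ in 𝓝 0, ∀ n ∈ Set.Iic N, ∀ p : Fin n → ℂ, (∃ i j, p i ≠ p j) →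
      ∃ c, IsApexColoring W δ p c :=
    (Set.finite_Iic N).eventually_all.2 fun n _ =>
      eventually_exists_isApexColoring h3 hfin hW (Fin n)
  obtain ⟨δ, hδ, hδ0⟩ := ((ev.filter_mono nhdsWithin_le_nhds).and self_mem_nhdsWithin).exists
    (f := 𝓝[>] 0)
  refine ⟨δ, hδ0, fun ι _ hcard p ⟨i, j, hij⟩ => ?_⟩
  let e := Finite.equivFin ι
  obtain ⟨c, hc⟩ := hδ _ hcard (p ∘ e.symm) ⟨e i, e j, by simpa using hij⟩
  exact ⟨_, hc.comp_equiv e.symm⟩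

end Compactness

section Apex

open Filter Topology ComplexConjugate

/-- The ratio `(d - a) / (b - a)` for a positively oriented triangle `a b d` in `ℂ` with angles
`α` at `a` and `β` at `b`. By the law of sines its modulus is `sin β / sin (α + β)`. -/
def apexRatio (α β : ℝ) : ℂ :=
  (Real.sin β / Real.sin (α + β) : ℝ) * Complex.exp (α * Complex.I)

theorem conj_apexRatio (α β : ℝ) :
    conj (apexRatio α β) =
      (Real.sin β / Real.sin (α + β) : ℝ) * Complex.exp (-(α * Complex.I)) := by
  rw [apexRatio, map_mul, Complex.conj_ofReal, ← Complex.exp_conj]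
  simp

theorem exp_mul_conj_apexRatio (α β : ℝ) :
    Complex.exp (2 * α * Complex.I) * conj (apexRatio α β) = apexRatio α β := by
  rw [conj_apexRatio, apexRatio, mul_left_comm, ← Complex.exp_add]
  congr 2
  ring

theorem continuousAt_apexRatio {α β : ℝ} (h : Real.sin (α + β) ≠ 0) :
    ContinuousAt (fun p : ℝ × ℝ => apexRatio p.1 p.2) (α, β) := by
  unfold apexRatio
  fun_prop (disch := exact h)

theorem angle_eq_abs_arg_div {a b d : ℂ} (hba : b ≠ a) (hda : d ≠ a) :
    ∠ b a d = |((d - a) / (b - a)).arg| := by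
  rw [EuclideanGeometry.angle_comm]
  exact Complex.angle_eq_abs_arg (sub_ne_zero.2 hda) (sub_ne_zero.2 hba)

theorem norm_sub_div_sub_eq_sin_div_sin {a b d : ℂ} (hba : b ≠ a)
    (hsin : Real.sin (∠ b a d + ∠ a b d) ≠ 0) :
    ‖(d - a) / (b - a)‖ = Real.sin (∠ a b d) / Real.sin (∠ b a d + ∠ a b d) := by
  have sin_apex : Real.sin (∠ b a d + ∠ a b d) = Real.sin (∠ b d a) := by
    rw [← Real.sin_pi_sub, EuclideanGeometry.angle_comm b a d,
      ← EuclideanGeometry.angle_add_angle_add_angle_eq_pi d hba]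
    congr 1
    ring
  rw [sin_apex] at hsin ⊢
  rw [norm_div, ← dist_eq_norm, ← dist_eq_norm, div_eq_div_iff (dist_ne_zero.2 hba) hsin,
    dist_comm b a, mul_comm]
  exact EuclideanGeometry.sin_angle_mul_dist_eq_sin_angle_mul_dist b d a

theorem sub_div_sub_eq_apexRatio_or_conj {a b d : ℂ} (hba : b ≠ a) (hda : d ≠ a)
    (hsin : Real.sin (∠ b a d + ∠ a b d) ≠ 0) :
    (d - a) / (b - a) = apexRatio (∠ b a d) (∠ a b d) ∨
      (d - a) / (b - a) = conj (apexRatio (∠ b a d) (∠ a b d)) := by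
  have polar := Complex.norm_mul_exp_arg_mul_I ((d - a) / (b - a))
  rw [norm_sub_div_sub_eq_sin_div_sin hba hsin] at polar
  rw [conj_apexRatio, apexRatio, ← polar]
  rcases abs_choice ((d - a) / (b - a)).arg with h | h
  · left
    rw [angle_eq_abs_arg_div hba hda, h]
  · right
    rw [angle_eq_abs_arg_div hba hda, h]
    simp

theorem exists_eps_isApproxApex_of_angle_close {α β δ : ℝ} (hsin : Real.sin (α + β) ≠ 0)
    (hδ : 0 < δ) :
    ∃ ε > 0, ∀ a b d : ℂ, b ≠ a → d ≠ a → |∠ b a d - α| < ε → |∠ a b d - β| < ε →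
      ∃ w ∈ ({apexRatio α β, conj (apexRatio α β)} : Set ℂ), IsApproxApex δ w a b d := by
  have sin_ne_zero : ∀ᶠ p : ℝ × ℝ in 𝓝 (α, β), Real.sin (p.1 + p.2) ≠ 0 :=
    ContinuousAt.eventually_ne (by fun_prop) hsin
  have ratio_close := (continuousAt_apexRatio hsin).eventually (Metric.ball_mem_nhds _ hδ)
  obtain ⟨ε, hε, hball⟩ := Metric.eventually_nhds_iff.1 (sin_ne_zero.and ratio_close)
  refine ⟨ε, hε, fun a b d hba hda hα hβ => ?_⟩
  obtain ⟨hsin', hdist⟩ := hball (y := (∠ b a d, ∠ a b d)) (max_lt hα hβ)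
  have of_ratio_close : ∀ w, ‖(d - a) / (b - a) - w‖ < δ → IsApproxApex δ w a b d := by
    intro w hw
    have : d - a - w * (b - a) = ((d - a) / (b - a) - w) * (b - a) := by
      rw [sub_mul, div_mul_cancel₀ _ (sub_ne_zero.2 hba)]
    rw [IsApproxApex, this, norm_mul]
    gcongr
  rw [dist_eq_norm] at hdist
  rcases sub_div_sub_eq_apexRatio_or_conj hba hda hsin' with h | h
  · exact ⟨_, .inl rfl, of_ratio_close _ (by rwa [h])⟩
  · exact ⟨_, .inr rfl, of_ratio_close _ (by rwa [h, ← map_sub, Complex.norm_conj])⟩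

end Apex

section AlgebraicIndependence

open MeasureTheory

variable {R A : Type*} [CommRing R] [CommRing A] [Algebra R A]

theorem algebraicIndependent_pair {x y : A} (hx : Transcendental R x)
    (hy : Transcendental (Algebra.adjoin R {x}) y) : AlgebraicIndependent R ![x, y] := by
  have image_compl : ![x, y] '' {1}ᶜ = {x} := by
    have : ({1}ᶜ : Set (Fin 2)) = {0} := by ext i; fin_cases i <;> simp
    rw [this, Set.image_singleton, Matrix.cons_val_zero]
  rw [AlgebraicIndependent.iff_transcendental_adjoin_image 1, image_compl]
  let _ : Unique {j : Fin 2 // j ≠ 1} := ⟨⟨⟨0, by decide⟩⟩, by decide⟩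
  exact ⟨algebraicIndependent_unique_type_iff.2 hx, hy⟩

variable [Countable R]

theorem countable_adjoin {s : Set A} (hs : s.Countable) : Countable (Algebra.adjoin R s) := by
  rw [← Cardinal.mk_le_aleph0_iff, ← Cardinal.lift_le_aleph0]
  refine (Algebra.lift_cardinalMk_adjoin_le R s).trans ?_
  simp [hs]

theorem countable_sep_isAlgebraic [IsDomain R] [IsDomain A] [Module.IsTorsionFree R A]
    {X : Type*} {s : Set X} {f : X → A} (hf : s.InjOn f) :
    {x ∈ s | IsAlgebraic R (f x)}.Countable :=
  Set.MapsTo.countable_of_injOn (f := f) (fun _ h => h.2) (hf.mono (Set.sep_subset _ _))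
    (Algebraic.countable R A)

variable [TopologicalSpace A] [IsTopologicalRing A] [T1Space A] [SecondCountableTopology A]
  [MeasurableSpace A] [BorelSpace A]

theorem measurableSet_algebraicIndependent {X ι : Type*} [MeasurableSpace X] [Countable ι]
    {v : X → ι → A} (hv : Measurable v) : MeasurableSet {x | AlgebraicIndependent R (v x)} := by
  have : Countable (MvPolynomial ι R) := by
    rw [← Cardinal.mk_le_aleph0_iff]
    refine MvPolynomial.cardinalMk_le_max_lift.trans ?_
    simp
  simp only [algebraicIndependent_iff, Set.ofPred_forall]
  refine .iInter fun P => ?_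
  have continuous_aeval : Continuous fun u : ι → A => MvPolynomial.aeval u P := by
    simp only [MvPolynomial.aeval_def, MvPolynomial.eval₂_eq_eval_map]
    exact MvPolynomial.continuous_eval _
  exact .imp (continuous_aeval.measurable.comp hv (measurableSet_singleton 0)) (.const _)

theorem ae_algebraicIndependent_pair [IsDomain R] [IsDomain A] [Module.IsTorsionFree R A]
    {X Y : Type*} [MeasurableSpace X] [MeasurableSpace Y] {μ : Measure X} {ν : Measure Y}
    [NullSingletonClass μ] [NullSingletonClass ν] [SFinite ν]
    {D : Set (X × Y)} (hD : MeasurableSet D)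
    {f : X → A} (hf : Measurable f) (hfD : (Prod.fst '' D).InjOn f)
    {g : X × Y → A} (hg : Measurable g) (hgD : ∀ x, {y | (x, y) ∈ D}.InjOn fun y => g (x, y)) :
    ∀ᵐ z ∂(μ.prod ν).restrict D, AlgebraicIndependent R ![f z.1, g z] := by
  have measurable_pair : Measurable fun z : X × Y => ![f z.1, g z] :=
    measurable_pi_iff.2 <| Fin.forall_fin_two.2 ⟨hf.comp measurable_fst, hg⟩
  have measurableSet_imp : MeasurableSet {z | z ∈ D → AlgebraicIndependent R ![f z.1, g z]} :=
    .imp hD (measurableSet_algebraicIndependent measurable_pair)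
  rw [ae_restrict_iff' hD, Measure.ae_prod_iff_ae_ae measurableSet_imp]
  filter_upwards [(countable_sep_isAlgebraic (R := R) hfD).ae_notMem μ] with x hx
  have := countable_adjoin (R := R) (Set.countable_singleton (f x))
  filter_upwards [(countable_sep_isAlgebraic (R := Algebra.adjoin R {f x}) (hgD x)).ae_notMem ν]
    with y hy hxy
  exact algebraicIndependent_pair (fun h => hx ⟨⟨_, hxy, rfl⟩, h⟩) fun h => hy ⟨hxy, h⟩

end AlgebraicIndependence

section AlmostEveryTriangle

open MeasureTheory ComplexConjugate

theorem injOn_exp_two_mul_mul_I :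
    (Set.Ioo 0 Real.pi).InjOn fun α : ℝ => Complex.exp (2 * α * Complex.I) := by
  intro x hx y hy h
  have circle_eq : Circle.exp (2 * x) = Circle.exp (2 * y) := by
    ext
    simpa using h
  have := Circle.exp_injOn_Icc (a := 2 * min x y) (b := 2 * max x y) ?_ ?_ ?_ circle_eq
  all_goals grind

theorem injOn_conj_apexRatio (α : ℝ) :
    {β : ℝ | 0 < α ∧ 0 < β ∧ α + β < Real.pi}.InjOn fun β => conj (apexRatio α β) := by
  rintro x ⟨hα, hx, hxπ⟩ y ⟨-, hy, hyπ⟩ h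
  simp only [conj_apexRatio] at h
  have ratio_eq := Complex.ofReal_injective (mul_right_cancel₀ (Complex.exp_ne_zero _) h)
  have sin_pos : ∀ {t}, 0 < t → t < Real.pi → 0 < Real.sin t := Real.sin_pos_of_pos_of_lt_pi
  rw [div_eq_div_iff (sin_pos (by linarith) hxπ).ne' (sin_pos (by linarith) hyπ).ne',
    Real.sin_add, Real.sin_add] at ratio_eq
  have sin_mul_sin_sub : Real.sin α * Real.sin (x - y) = 0 := by
    rw [Real.sin_sub]
    linear_combination ratio_eq
  have sin_sub := (mul_eq_zero.1 sin_mul_sin_sub).resolve_left (sin_pos hα (by linarith)).ne'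
  exact sub_eq_zero.1 <|
    (Real.sin_eq_zero_iff_of_lt_of_lt (by linarith) (by linarith)).1 sin_sub

theorem measurable_conj_apexRatio : Measurable fun p : ℝ × ℝ => conj (apexRatio p.1 p.2) := by
  simp only [conj_apexRatio]
  fun_prop

theorem measurableSet_angle_region :
    MeasurableSet {q : ℝ × ℝ | 0 < q.1 ∧ 0 < q.2 ∧ q.1 + q.2 < Real.pi} := by
  measurability

theorem ae_algebraicIndependent_exp_conj_apexRatio :
    ∀ᵐ p : ℝ × ℝ ∂volume.restrict {q | 0 < q.1 ∧ 0 < q.2 ∧ q.1 + q.2 < Real.pi},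
      AlgebraicIndependent ℤ
        ![Complex.exp (2 * p.1 * Complex.I), conj (apexRatio p.1 p.2)] := by
  refine ae_algebraicIndependent_pair measurableSet_angle_region
    (f := fun α : ℝ => Complex.exp (2 * α * Complex.I)) (by fun_prop)
    (injOn_exp_two_mul_mul_I.mono ?_) measurable_conj_apexRatio injOn_conj_apexRatio
  rintro _ ⟨p, ⟨hα, hβ, hαβ⟩, rfl⟩
  exact ⟨hα, by linarith⟩

end AlmostEveryTriangle

section SimilarTriples

open Finset ComplexConjugate

theorem triAngle_eq_angle (p : Fin 3 → Plane) {i j l : Fin 3} (hij : i ≠ j) (hil : i ≠ l)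
    (hjl : j ≠ l) : triAngle p i = ∠ (p j) (p i) (p l) := by
  have : (j = i + 1 ∧ l = i + 2) ∨ (l = i + 1 ∧ j = i + 2) := by decide +revert
  obtain ⟨rfl, rfl⟩ | ⟨rfl, rfl⟩ := this
  · rfl
  · exact EuclideanGeometry.angle_comm _ _ _

variable {T : Fin 3 → Plane}

theorem exists_angle_close_of_formsSimilar {ε : ℝ} {S : Finset Plane} (h : FormsSimilar ε T S) :
    ∃ a b d, a ≠ b ∧ a ≠ d ∧ b ≠ d ∧ S = {a, b, d} ∧
      |∠ b a d - triAngle T 0| < ε ∧ |∠ a b d - triAngle T 1| < ε := by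
  obtain ⟨p, hS, hp, σ, hσ⟩ := h
  have p_injective : p.Injective := (affineIndependent_iff_not_collinear.2 hp).injective
  have ne_of_ne : ∀ {i j}, i ≠ j → σ.symm i ≠ σ.symm j := σ.symm.injective.ne
  have angle_close : ∀ {i j l}, i ≠ j → i ≠ l → j ≠ l →
      |∠ (p (σ.symm j)) (p (σ.symm i)) (p (σ.symm l)) - triAngle T i| < ε := by
    intro i j l hij hil hjl
    rw [← triAngle_eq_angle p (ne_of_ne hij) (ne_of_ne hil) (ne_of_ne hjl)]
    simpa using hσ (σ.symm i)
  refine ⟨p (σ.symm 0), p (σ.symm 1), p (σ.symm 2), p_injective.ne (ne_of_ne (by decide)),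
    p_injective.ne (ne_of_ne (by decide)), p_injective.ne (ne_of_ne (by decide)), ?_,
    angle_close (by decide) (by decide) (by decide),
    angle_close (by decide) (by decide) (by decide)⟩
  apply Finset.coe_injective
  rw [hS, ← σ.symm.surjective.range_comp p]
  ext x
  simp only [Set.mem_range, Function.comp_apply, Fin.exists_fin_succ, Finset.coe_insert,
    Finset.coe_singleton, Set.mem_insert_iff, Set.mem_singleton_iff]
  simp [eq_comm]

theorem exists_eps_forall_exists_isZeroSumColoring
    (hsin : Real.sin (triAngle T 0 + triAngle T 1) ≠ 0)
    (hind : AlgebraicIndependent ℤ ![Complex.exp (2 * triAngle T 0 * Complex.I),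
      conj (apexRatio (triAngle T 0) (triAngle T 1))]) (N : ℕ) :
    ∃ ε > 0, ∀ Q : Finset Plane, Q.Nontrivial → #Q ≤ N →
      ∃ c : Plane → ZMod 3, IsZeroSumColoring (FormsSimilar ε T) Q c := by
  obtain ⟨B, h3, hw, hconj⟩ := exists_valuationSubring_mul_and_self_residue_eq_neg_one hind
  rw [exp_mul_conj_apexRatio] at hw
  obtain ⟨δ, hδ, hcol⟩ := exists_delta_forall_exists_isApexColoring h3
    (Set.toFinite {apexRatio (triAngle T 0) (triAngle T 1),
      conj (apexRatio (triAngle T 0) (triAngle T 1))}) (by simp [hw, hconj]) N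
  obtain ⟨ε, hε, happrox⟩ := exists_eps_isApproxApex_of_angle_close hsin hδ
  refine ⟨ε, hε, fun Q ⟨i, hi, j, hj, hij⟩ hQN => ?_⟩
  let φ : Plane ≃ₗᵢ[ℝ] ℂ := Complex.orthonormalBasisOneI.repr.symm
  have angle_φ (a b d : Plane) : ∠ (φ a) (φ b) (φ d) = ∠ a b d :=
    φ.toLinearIsometry.toAffineIsometry.angle_map a b d
  obtain ⟨c, ⟨⟨k, l, hkl⟩, hsum⟩⟩ := hcol Q (by simpa using hQN) (fun i => φ i)
    ⟨⟨i, hi⟩, ⟨j, hj⟩, φ.injective.ne hij⟩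
  have extend_apply (x : Q) : Function.extend Subtype.val c 0 x = c x :=
    Subtype.val_injective.extend_apply c 0 x
  refine ⟨Function.extend Subtype.val c 0,
    ⟨k, k.2, l, l.2, by rwa [extend_apply, extend_apply]⟩, fun S hS => ?_⟩
  obtain ⟨⟨hSQ, -⟩, hS⟩ := mem_inducedEdges.1 hS
  obtain ⟨a, b, d, hab, had, hbd, rfl, hα, hβ⟩ := exists_angle_close_of_formsSimilar hS
  obtain ⟨w, hw, hwd⟩ := happrox (φ a) (φ b) (φ d) (φ.injective.ne hab.symm)
    (φ.injective.ne had.symm) (by rwa [angle_φ]) (by rwa [angle_φ])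
  rw [sum_insert (by simp [hab, had]), sum_pair hbd, ← add_assoc]
  simp only [insert_subset_iff, singleton_subset_iff] at hSQ
  obtain ⟨ha, hb, hd⟩ := hSQ
  rw [extend_apply ⟨a, ha⟩, extend_apply ⟨b, hb⟩, extend_apply ⟨d, hd⟩]
  exact hsum w hw ⟨a, ha⟩ ⟨b, hb⟩ ⟨d, hd⟩ hwd

end SimilarTriples

section Density

open Finset Filter ComplexConjugate

theorem simCount_eq_card_inducedEdges (ε : ℝ) (T : Fin 3 → Plane) (P : Finset Plane) :
    simCount ε T P = #(inducedEdges 3 (FormsSimilar ε T) P) := by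
  rw [simCount, ← Set.ncard_coe_finset]
  congr 1
  ext S
  simp [and_assoc]

theorem hGeo_le {n : ℕ} {T : Fin 3 → Plane} {ε B : ℝ}
    (h : ∀ P : Finset Plane, #P = n → (simCount ε T P : ℝ) ≤ B) : (hGeo n T ε : ℝ) ≤ B := by
  obtain ⟨P₀, hP₀⟩ := Infinite.exists_subset_card_eq Plane n
  have hB : 0 ≤ B := (Nat.cast_nonneg _).trans (h P₀ hP₀)
  rw [← Nat.le_floor_iff hB]
  refine csSup_le ⟨_, P₀, hP₀, rfl⟩ ?_
  rintro _ ⟨P, hP, rfl⟩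
  exact Nat.le_floor (h P hP)

theorem exists_pow_three_le_mul_choose_three_add {c : ℝ} (hc : 1 / 4 < c) :
    ∃ N : ℕ, 3 ≤ N ∧ (N : ℝ) ^ 3 ≤ 24 * (c * N.choose 3) + N := by
  obtain ⟨N, hN3, hN⟩ := ((eventually_ge_atTop 3).and <|
    tendsto_natCast_atTop_atTop.eventually_ge_atTop ((1 + 8 * c) / (4 * c - 1))).exists
  refine ⟨N, hN3, ?_⟩
  have add_one_le : (N : ℝ) + 1 ≤ 4 * c * (N - 2) := by
    rw [div_le_iff₀ (by linarith)] at hN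
    linarith
  have choose_three : (N.choose 3 : ℝ) = N * (N - 1) * (N - 2) / 6 := by
    rw [Nat.cast_choose_eq_descPochhammer_div, descPochhammer_eval_eq_prod_range]
    simp [Finset.prod_range_succ, Nat.factorial]
  have hN1 : (1 : ℝ) ≤ N := by norm_cast; omega
  have := mul_le_mul_of_nonneg_left add_one_le
    (mul_nonneg N.cast_nonneg (sub_nonneg.2 hN1))
  rw [choose_three]
  linear_combination this

theorem exists_eps_limsup_hGeo_div_choose_le {T : Fin 3 → Plane}
    (hsin : Real.sin (triAngle T 0 + triAngle T 1) ≠ 0)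
    (hind : AlgebraicIndependent ℤ ![Complex.exp (2 * triAngle T 0 * Complex.I),
      conj (apexRatio (triAngle T 0) (triAngle T 1))]) {c : ℝ} (hc : 1 / 4 < c) :
    ∃ ε : ℝ, 0 < ε ∧
      limsup (fun n : ℕ => (hGeo n T ε : ℝ) / (n.choose 3 : ℝ)) atTop ≤ c := by
  obtain ⟨N, hN3, hNc⟩ := exists_pow_three_le_mul_choose_three_add hc
  obtain ⟨ε, hε, hcol⟩ := exists_eps_forall_exists_isZeroSumColoring hsin hind N
  have edges_le (Q : Finset Plane) (hQ : #Q = N) :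
      (#(inducedEdges 3 (FormsSimilar ε T) Q) : ℝ) ≤ c * N.choose 3 := by
    have := card_inducedEdges_add_card_le Q fun Q' hQ' hnt =>
      hcol Q' hnt ((card_le_card hQ').trans hQ.le)
    rw [hQ] at this
    have : (24 * #(inducedEdges 3 (FormsSimilar ε T) Q) + N : ℝ) ≤ N ^ 3 := by exact_mod_cast this
    linarith
  refine ⟨ε, hε, limsup_le_of_le (isCoboundedUnder_le_of_le (x := 0) _ fun n => by positivity) ?_⟩
  filter_upwards [eventually_ge_atTop N] with n hn
  refine div_le_of_le_mul₀ (Nat.cast_nonneg _) (by linarith) (hGeo_le fun P hP => ?_)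
  rw [simCount_eq_card_inducedEdges, ← hP]
  exact card_inducedEdges_le_mul_choose hN3 edges_le (hP ▸ hn)

theorem stmt_9_general :
    ∀ᵐ p : ℝ × ℝ ∂(MeasureTheory.volume.restrict
        {q : ℝ × ℝ | 0 < q.1 ∧ 0 < q.2 ∧ q.1 + q.2 < Real.pi}),
      ∀ T : Fin 3 → Plane, triAngle T 0 = p.1 → triAngle T 1 = p.2 →
        ∀ c : ℝ, 1 / 4 < c → ∃ ε : ℝ, 0 < ε ∧
          limsup (fun n : ℕ => (hGeo n T ε : ℝ) / (n.choose 3 : ℝ)) atTop ≤ c := by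
  filter_upwards [ae_algebraicIndependent_exp_conj_apexRatio,
    MeasureTheory.ae_restrict_mem measurableSet_angle_region]
    with ⟨α, β⟩ hind ⟨hα, hβ, hαβ⟩ T h0 h1 c hc
  subst h0 h1
  exact exists_eps_limsup_hGeo_div_choose_le
    (Real.sin_pos_of_pos_of_lt_pi (add_pos hα hβ) hαβ).ne' hind hc

end Density

/-- For almost every pair `(α, β)` of angles, any triangle `T` with angles
`α, β, π - α - β` satisfies: there is `ε > 0` with
`limsup h(n, T, ε)/C(n,3) ≤ 0.25108`. -/
theorem stmt_9 :
    ∀ᵐ p : ℝ × ℝ ∂(MeasureTheory.volume.restrict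
        {q : ℝ × ℝ | 0 < q.1 ∧ 0 < q.2 ∧ q.1 + q.2 < Real.pi}),
      ∀ T : Fin 3 → Plane, IsTriangle T →
        triAngle T 0 = p.1 → triAngle T 1 = p.2 →
        ∃ ε : ℝ, 0 < ε ∧
          Filter.limsup (fun n : ℕ => (hGeo n T ε : ℝ) / (Nat.choose n 3 : ℝ))
            Filter.atTop ≤ 0.25108 := by
  filter_upwards [stmt_9_general] with p hp T _ h0 h1
  exact hp T h0 h1 0.25108 (by norm_num)

end
end
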